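/- Let G = (V,E) be a finite connected simple graph with d vertices. Consider the linear orderings v_1 v_2 ⋯ v_d of V (bijections {1,…,d} → V), and let ~ be the equivalence relation on them generated by the two operations: (i) exchanging two consecutive vertices v_j, v_{j+1} when {v_j, v_{j+1}} is not an edge of G, and (ii) cyclically shifting the entire ordering, v_1 v_2 ⋯ v_d ↦ v_2 ⋯ v_d v_1. Then the Möbius invariant μ(G) equals the number of equivalence classes of linear orderings of V under ~. -/

import Mathlib

open Finset

attribute [local instance] Classical.propDecidable
attribute [local instance] Fintype.toLocallyFiniteOrder

variable {V : Type*} [Fintype V]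

noncomputable instance : Fintype (Setoid V) :=
  Fintype.ofInjective (fun s : Setoid V => s.r) fun s t h => by
    cases s; cases t; simp only at h; subst h; rfl

/-- The lattice `L(G)` of partitions of the vertex set of `G` (encoded as setoids, i.e.
equivalence relations, ordered by refinement) all of whose blocks induce connected subgraphs. -/
def ConnPartition (G : SimpleGraph V) : Type _ :=
  {s : Setoid V // ∀ B ∈ s.classes, (G.induce B).Connected}

instance (G : SimpleGraph V) : PartialOrder (ConnPartition G) :=
  Subtype.partialOrder _

noncomputable instance (G : SimpleGraph V) : Fintype (ConnPartition G) :=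
  Subtype.fintype _

/-- The Möbius invariant `μ(G)`: the absolute value of `μ(0̂, 1̂)` in the lattice of connected
partitions of `G`, where `0̂` is the partition into singletons and `1̂` the one-block partition
(defined to be `0` in the degenerate case where `0̂` or `1̂` does not lie in the lattice). -/
noncomputable def mobiusInvariant (G : SimpleGraph V) : ℤ :=
  if h : (∀ B ∈ (⊥ : Setoid V).classes, (G.induce B).Connected) ∧
      (∀ B ∈ (⊤ : Setoid V).classes, (G.induce B).Connected) then
    |IncidenceAlgebra.mu ℤ (⟨⊥, h.1⟩ : ConnPartition G) ⟨⊤, h.2⟩|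
  else 0

/-- The one-step relation on linear orderings of the vertices (bijections `Fin d ≃ V`):
(i) exchange two consecutive vertices that are not adjacent in `G`, or
(ii) cyclically shift the whole ordering. -/
def orderingStep (G : SimpleGraph V) (σ τ : Fin (Fintype.card V) ≃ V) : Prop :=
  (∃ (j : Fin (Fintype.card V)) (hj : (j : ℕ) + 1 < Fintype.card V),
      ¬ G.Adj (σ j) (σ ⟨(j : ℕ) + 1, hj⟩) ∧
      τ = (Equiv.swap j ⟨(j : ℕ) + 1, hj⟩).trans σ) ∨
    τ = (finRotate (Fintype.card V)).trans σ

/-!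
Both sides count the acyclic orientations of `G` whose only source is a fixed vertex `q`.

For the Möbius function, let `u` and `v` be adjacent vertices in one block of a connected
partition `π`. Merging the blocks of `u` and `v` is a closure operator, so the values `μ(0̂, t)`,
summed over all `t` with closure `π`, vanish; this expresses `μ(0̂, π)` by the `μ(0̂, t)` with
`t < π`. Up to sign, the acyclic orientations of the blocks of `π` with one prescribed source per
block, `u` among them, satisfy the same recursion: splitting off the vertices reachable from `v`
turns `v` into an additional source, and this is undone by directing all edges from the block of
`u` to the block of `v`.

For the orderings, direct each edge of `G` to its later end. Two orderings are related by
commutations iff they induce the same orientation, and a cyclic shift turns a source into a sink.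
Let `k v` count these turns at `v`. Along an arc of the initial orientation `k` does not increase,
so `k` is maximal at `q` if `q` is the only source; hence `k` is constant between two orientations
with unique source `q`, and these agree. Conversely, turning sources other than `q` terminates,
because `k v ≤ dist v q` as long as `k q = 0`, and it ends with `q` as the only source.
-/

section ClosureOperator

variable {P 𝕜 : Type*} [PartialOrder P] [LocallyFiniteOrder P] [DecidableEq P]
  [AddCommGroup 𝕜] [One 𝕜]

theorem sum_mu_closureOperator_fiber_eq_zero (c : ClosureOperator P) {b : P} (hb : c b ≠ b)
    (y : P) : ∑ x ∈ Icc b y with c x = y, IncidenceAlgebra.mu 𝕜 b x = 0 := by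
  induction hs : Icc b y using Finset.strongInduction generalizing y with
  | H s ih =>
    subst hs
    by_cases hy : b ≤ y ∧ c y = y
    · obtain ⟨hby, hcy⟩ := hy
      have hmaps : ∀ x ∈ Icc b y, c x ∈ Icc b y := fun x hx => by
        rw [mem_Icc] at hx ⊢
        exact ⟨hx.1.trans (c.le_closure x), (c.monotone hx.2).trans hcy.le⟩
      have hother : ∀ z ∈ Icc b y, z ≠ y →
          ∑ x ∈ Icc b y with c x = z, IncidenceAlgebra.mu 𝕜 b x = 0 := by
        intro z hz hzy
        rw [mem_Icc] at hz
        rw [← ih _ (Icc_ssubset_Icc_right hby le_rfl (hz.2.lt_of_ne hzy)) z rfl]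
        refine sum_congr (ext fun x => ?_) fun _ _ => rfl
        simp only [mem_filter, mem_Icc, and_congr_left_iff, and_congr_right_iff]
        rintro rfl -
        exact iff_of_true ((c.le_closure x).trans hz.2) (c.le_closure x)
      have hby' : b ≠ y := by
        rintro rfl
        exact hb hcy
      rw [← sum_eq_single_of_mem y (right_mem_Icc.2 hby) hother, sum_fiberwise_of_maps_to hmaps,
        IncidenceAlgebra.sum_Icc_mu_right, if_neg hby']
    · refine sum_eq_zero fun x hx => absurd ?_ hy
      obtain ⟨hx, rfl⟩ := mem_filter.1 hx
      exact ⟨(mem_Icc.1 hx).1.trans (c.le_closure x), c.idempotent x⟩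

theorem mu_eq_neg_sum_closureOperator_fiber (c : ClosureOperator P) {b y : P} (hb : c b ≠ b)
    (hby : b ≤ y) (hy : c y = y) :
    IncidenceAlgebra.mu 𝕜 b y = -∑ x ∈ Ico b y with c x = y, IncidenceAlgebra.mu 𝕜 b x := by
  have hsum := sum_mu_closureOperator_fiber_eq_zero (𝕜 := 𝕜) c hb y
  rw [← Ico_insert_right hby, filter_insert, if_pos hy, sum_insert (by simp)] at hsum
  exact eq_neg_of_add_eq_zero_left hsum

end ClosureOperator

section BlockGraph

variable {α : Type*} {G : SimpleGraph α} {s : Setoid α} {a b : α}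

/-- The spanning subgraph of `G` formed by the edges inside the blocks of the partition `s`. -/
def blockGraph (G : SimpleGraph α) (s : Setoid α) : SimpleGraph α where
  Adj a b := G.Adj a b ∧ s a b
  symm := ⟨fun _ _ h => ⟨h.1.symm, s.symm' h.2⟩⟩
  loopless := ⟨fun _ h => G.irrefl h.1⟩

lemma blockGraph_adj : (blockGraph G s).Adj a b ↔ G.Adj a b ∧ s a b := Iff.rfl

lemma blockGraph_mono {t : Setoid α} (hst : s ≤ t) : blockGraph G s ≤ blockGraph G t :=
  fun _ _ h => ⟨h.1, hst h.2⟩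

lemma blockGraph_bot : blockGraph G ⊥ = ⊥ := by
  ext a b
  exact iff_of_false (fun ⟨hadj, hab⟩ => hadj.ne hab) id

lemma blockGraph_top : blockGraph G ⊤ = G := by
  ext a b
  exact and_iff_left trivial

lemma reachableSetoid_blockGraph_le : (blockGraph G s).reachableSetoid ≤ s := by
  rintro a b ⟨p⟩
  induction p with
  | nil => exact s.refl' _
  | cons hadj _ ih => exact s.trans' hadj.2 ih

lemma forall_classes_connected_iff :
    (∀ B ∈ s.classes, (G.induce B).Connected) ↔ s ≤ (blockGraph G s).reachableSetoid := by
  constructor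
  · intro h x y hxy
    have hB := (h _ (s.mem_classes y)).preconnected ⟨x, hxy⟩ ⟨y, s.refl' y⟩
    let incl : G.induce {x | s x y} →g blockGraph G s :=
      ⟨Subtype.val, fun {a b} hab => ⟨hab, s.trans' a.2 (s.symm' b.2)⟩⟩
    exact hB.map incl
  · rintro h _ ⟨y, rfl⟩
    refine (SimpleGraph.connected_iff_exists_forall_reachable _).2 ⟨⟨y, s.refl' y⟩, ?_⟩
    rintro ⟨x, hx⟩
    obtain ⟨p⟩ := h hx
    symm
    induction p with
    | nil => rfl
    | @cons x z y hadj p ih =>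
      have hz : s z y := reachableSetoid_blockGraph_le ⟨p⟩
      have hxz : (G.induce {x | s x y}).Adj ⟨x, hx⟩ ⟨z, hz⟩ := hadj.1
      exact hxz.reachable.trans (ih hz)

end BlockGraph

section AcyclicOrientation

open Relation

variable {α : Type*} {H : SimpleGraph α} {O O' : α → α → Prop} {a b : α}

/-- The vertices without incoming arcs; an isolated vertex is a source. -/
def sources (O : α → α → Prop) : Set α := {x | ∀ y, ¬ O y x}

/-- `O` is an acyclic orientation of `H`: it picks one direction of every edge. Acyclicity is
encoded as well-foundedness, which on a finite vertex set means that there are no cycles. -/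
structure IsAcyclicOrientation (H : SimpleGraph α) (O : α → α → Prop) : Prop where
  adj_iff : ∀ a b, H.Adj a b ↔ O a b ∨ O b a
  wellFounded : WellFounded O

/-- The acyclic orientations of `H` whose set of sources is `R`. -/
def acyclicOrientations (H : SimpleGraph α) (R : Set α) : Set (α → α → Prop) :=
  {O | IsAcyclicOrientation H O ∧ sources O = R}

lemma eq_of_reflTransGen_of_mem_sources (hb : b ∈ sources O) (hab : ReflTransGen O a b) :
    a = b := by
  rcases hab.cases_tail with hba | ⟨c, -, hcb⟩
  · exact hba.symm
  · exact absurd hcb (hb c)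

namespace IsAcyclicOrientation

lemma adj (h : IsAcyclicOrientation H O) (hab : O a b) : H.Adj a b :=
  (h.adj_iff a b).2 (.inl hab)

lemma reachable (h : IsAcyclicOrientation H O) (hab : ReflTransGen O a b) : H.Reachable a b :=
  (H.reachable_iff_reflTransGen a b).2 (ReflTransGen.mono (fun _ _ => h.adj) _ _ hab)

lemma exists_mem_sources_reflTransGen (h : IsAcyclicOrientation H O) (x : α) :
    ∃ r ∈ sources O, ReflTransGen O r x := by
  induction x using h.wellFounded.induction with
  | _ x ih =>
    by_cases hx : x ∈ sources O
    · exact ⟨x, hx, .refl⟩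
    · obtain ⟨y, hyx⟩ : ∃ y, O y x := by simpa [sources] using hx
      obtain ⟨r, hr, hry⟩ := ih y hyx
      exact ⟨r, hr, hry.tail hyx⟩

lemma eq_of_le (h : IsAcyclicOrientation H O) (h' : IsAcyclicOrientation H O')
    (hle : ∀ a b, O a b → O' a b) : O = O' := by
  ext a b
  refine ⟨hle a b, fun hab => ?_⟩
  exact ((h.adj_iff a b).1 (h'.adj hab)).resolve_right fun hba =>
    h'.wellFounded.asymmetric _ _ hab (hle b a hba)

end IsAcyclicOrientation

lemma acyclicOrientations_bot : acyclicOrientations (⊥ : SimpleGraph α) Set.univ = {⊥} := by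
  ext O
  refine ⟨fun ⟨hO, _⟩ => ?_, ?_⟩
  · ext a b
    exact iff_of_false hO.adj id
  · rintro rfl
    exact ⟨⟨fun _ _ => by simp, ⟨fun _ => ⟨_, fun _ => False.elim⟩⟩⟩,
      Set.eq_univ_of_forall fun _ _ => id⟩

end AcyclicOrientation

section MergeSplit

open Relation

variable {α : Type*} {G : SimpleGraph α} {s t : Setoid α} {u v : α} {R : Set α}
  {O : α → α → Prop}

/-- `R` contains exactly one element of every block of `s`. -/
structure IsTransversal (s : Setoid α) (R : Set α) : Prop where
  exists_mem : ∀ x, ∃ r ∈ R, s r x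
  eq_of_rel : ∀ {r r'}, r ∈ R → r' ∈ R → s r r' → r = r'

lemma isTransversal_bot_iff : IsTransversal (⊥ : Setoid α) R ↔ R = Set.univ := by
  refine ⟨fun hR => Set.eq_univ_of_forall fun x => ?_, ?_⟩
  · obtain ⟨r, hr, rfl⟩ := hR.exists_mem x
    exact hr
  · rintro rfl
    exact ⟨fun x => ⟨x, trivial, rfl⟩, fun _ _ => id⟩

lemma exists_adj_of_ne_bot (hs : s ≠ ⊥) (hconn : s ≤ (blockGraph G s).reachableSetoid)
    (hR : IsTransversal s R) : ∃ u ∈ R, ∃ v, G.Adj u v ∧ s u v := by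
  obtain ⟨x, y, hxy, hne⟩ : ∃ x y, s x y ∧ x ≠ y := by
    by_contra! hcon
    exact hs (le_bot_iff.1 fun x y => hcon x y)
  obtain ⟨u, hu, hux⟩ := hR.exists_mem x
  obtain ⟨z, huz, hne'⟩ : ∃ z, s u z ∧ u ≠ z := by
    by_cases hux' : u = x
    · exact ⟨y, hux' ▸ hxy, hux' ▸ hne⟩
    · exact ⟨x, hux, hux'⟩
  obtain ⟨p⟩ := hconn huz
  cases p with
  | nil => exact absurd rfl hne'
  | cons hadj _ => exact ⟨u, hu, _, hadj⟩

lemma isTransversal_top_singleton (q : α) : IsTransversal ⊤ {q} :=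
  ⟨fun _ => ⟨q, rfl, trivial⟩, fun hr hr' _ => hr.trans hr'.symm⟩

/-- The partition obtained from `s` by merging the blocks of `u` and `v`. -/
def mergeBlocks (s : Setoid α) (u v : α) : Setoid α where
  r x y := s x y ∨ s x u ∧ s y v ∨ s x v ∧ s y u
  iseqv := by
    have hsymm := @s.symm'
    have htrans := @s.trans'
    exact ⟨fun x => .inl (s.refl' x), by grind, by grind⟩

lemma mergeBlocks_apply {x y : α} :
    mergeBlocks s u v x y ↔ s x y ∨ s x u ∧ s y v ∨ s x v ∧ s y u := Iff.rfl

lemma le_mergeBlocks : s ≤ mergeBlocks s u v := fun _ _ => .inl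

lemma mergeBlocks_rel : mergeBlocks s u v u v := .inr (.inl ⟨s.refl' u, s.refl' v⟩)

lemma mergeBlocks_le (hst : s ≤ t) (huv : t u v) : mergeBlocks s u v ≤ t := by
  rintro x y (hxy | ⟨hx, hy⟩ | ⟨hx, hy⟩)
  · exact hst hxy
  · exact t.trans' (hst hx) (t.trans' huv (t.symm' (hst hy)))
  · exact t.trans' (hst hx) (t.trans' (t.symm' huv) (t.symm' (hst hy)))

lemma IsTransversal.insert_of_mergeBlocks (hR : IsTransversal (mergeBlocks s u v) R) (hu : u ∈ R)
    (huv : ¬ s u v) : IsTransversal s (insert v R) := by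
  have hrefl := s.refl'
  have hsymm := @s.symm'
  have htrans := @s.trans'
  obtain ⟨hex, heq⟩ := hR
  simp only [mergeBlocks_apply] at hex heq
  refine ⟨fun x => ?_, ?_⟩
  · obtain ⟨r, hr, hrx⟩ := hex x
    grind
  · grind

lemma IsTransversal.notMem_of_rel (hR : IsTransversal s R) (hu : u ∈ R) (hne : u ≠ v)
    (huv : s u v) : v ∉ R := fun hv => hne (hR.eq_of_rel hu hv huv)

/-- The partition obtained from `s` by splitting every block into the vertices that can be reached
from `v` along `O` and those that cannot. -/
def splitBlocks (s : Setoid α) (O : α → α → Prop) (v : α) : Setoid α :=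
  s ⊓ Setoid.ker (ReflTransGen O v)

lemma splitBlocks_apply {x y : α} :
    splitBlocks s O v x y ↔ s x y ∧ (ReflTransGen O v x ↔ ReflTransGen O v y) := by
  rw [splitBlocks, Setoid.inf_iff_and, Setoid.ker_def, eq_iff_iff]

lemma splitBlocks_le : splitBlocks s O v ≤ s := inf_le_left

/-- The arcs of `O` inside the blocks of the partition `t`. -/
def blockArcs (O : α → α → Prop) (t : Setoid α) (a b : α) : Prop := O a b ∧ t a b

/-- `O` together with all edges of `G` from the block of `u` to the block of `v`, directed that
way. -/
def glue (G : SimpleGraph α) (t : Setoid α) (u v : α) (O : α → α → Prop) (a b : α) : Prop :=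
  O a b ∨ G.Adj a b ∧ t a u ∧ t b v

lemma IsAcyclicOrientation.rel_of_reflTransGen {a b : α}
    (h : IsAcyclicOrientation (blockGraph G s) O) (hab : ReflTransGen O a b) : s a b :=
  reachableSetoid_blockGraph_le (h.reachable hab)

lemma IsAcyclicOrientation.le_reachableSetoid (h : IsAcyclicOrientation (blockGraph G s) O)
    (hR : IsTransversal s (sources O)) : s ≤ (blockGraph G s).reachableSetoid := by
  intro x y hxy
  obtain ⟨r, hr, hrx⟩ := h.exists_mem_sources_reflTransGen x
  obtain ⟨r', hr', hry⟩ := h.exists_mem_sources_reflTransGen y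
  obtain rfl : r = r' := hR.eq_of_rel hr hr' <|
    s.trans' (h.rel_of_reflTransGen hrx) (s.trans' hxy (s.symm' (h.rel_of_reflTransGen hry)))
  exact (h.reachable hrx).symm.trans (h.reachable hry)

section Split

lemma isAcyclicOrientation_blockArcs (h : IsAcyclicOrientation (blockGraph G s) O) (hts : t ≤ s) :
    IsAcyclicOrientation (blockGraph G t) (blockArcs O t) where
  adj_iff a b := by
    have hadj := h.adj_iff a b
    have hab := @hts a b
    have hsymm := t.comm' (x := a) (y := b)
    rw [blockGraph_adj] at hadj ⊢
    unfold blockArcs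
    tauto
  wellFounded := Subrelation.wf And.left h.wellFounded

lemma sources_blockArcs_splitBlocks (h : IsAcyclicOrientation (blockGraph G s) O) (v : α) :
    sources (blockArcs O (splitBlocks s O v)) = insert v (sources O) := by
  ext x
  constructor
  · intro hx
    by_contra! hcon
    obtain ⟨hxv, y, hyx⟩ : x ≠ v ∧ ∃ y, O y x := by simpa [sources] using hcon
    have hreach : ∀ z, O z x → ReflTransGen O v x → ¬ ReflTransGen O v z := fun z hzx hvx hvz =>
      hx z ⟨hzx, splitBlocks_apply.2 ⟨(h.adj hzx).2, iff_of_true hvz hvx⟩⟩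
    by_cases hvx : ReflTransGen O v x
    · rcases hvx.cases_tail with rfl | ⟨z, hvz, hzx⟩
      · exact hxv rfl
      · exact hreach z hzx hvx hvz
    · exact hx y ⟨hyx, splitBlocks_apply.2
        ⟨(h.adj hyx).2, iff_of_false (fun hvy => hvx (hvy.tail hyx)) hvx⟩⟩
  · rintro (rfl | hx) y ⟨hyx, hsplit⟩
    · have hxy : ReflTransGen O x y := (splitBlocks_apply.1 hsplit).2.2 .refl
      exact h.wellFounded.transGen.asymmetric _ _ (.tail' hxy hyx) (.tail' hxy hyx)
    · exact hx y hyx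

lemma not_splitBlocks_of_mem_sources (hu : u ∈ sources O) (hne : u ≠ v) :
    ¬ splitBlocks s O v u v := fun h =>
  hne (eq_of_reflTransGen_of_mem_sources hu ((splitBlocks_apply.1 h).2.2 .refl)).symm

lemma mergeBlocks_splitBlocks (h : IsAcyclicOrientation (blockGraph G s) O) (hu : u ∈ sources O)
    (hne : u ≠ v) (huv : s u v) : mergeBlocks (splitBlocks s O v) u v = s := by
  have hsymm := @s.symm'
  have htrans := @s.trans'
  have hvu : ¬ ReflTransGen O v u := fun hvu => hne (eq_of_reflTransGen_of_mem_sources hu hvu).symm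
  have hvv : ReflTransGen O v v := .refl
  have hreach : ∀ x, ReflTransGen O v x → s v x := fun x => h.rel_of_reflTransGen
  ext x y
  simp only [mergeBlocks_apply, splitBlocks_apply]
  grind

lemma glue_blockArcs_splitBlocks (h : IsAcyclicOrientation (blockGraph G s) O)
    (hu : u ∈ sources O) (hne : u ≠ v) (huv : s u v) :
    glue G (splitBlocks s O v) u v (blockArcs O (splitBlocks s O v)) = O := by
  have hsymm := @s.symm'
  have htrans := @s.trans'
  have hvu : ¬ ReflTransGen O v u := fun hvu => hne (eq_of_reflTransGen_of_mem_sources hu hvu).symm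
  have hvv : ReflTransGen O v v := .refl
  have hreach : ∀ x, ReflTransGen O v x → s v x := fun x => h.rel_of_reflTransGen
  ext a b
  have hadj := h.adj_iff a b
  rw [blockGraph_adj] at hadj
  simp only [glue, blockArcs, splitBlocks_apply]
  grind

end Split

section Glue

lemma wellFounded_glue (h : IsAcyclicOrientation (blockGraph G t) O) (huv : ¬ t u v) :
    WellFounded (glue G t u v O) := by
  -- Every arc preserves membership in the block of `v` or enters this block.
  let f : α → Prop × α := fun x => (t x v, x)
  refine Subrelation.wf (r := InvImage (Prod.Lex (· < ·) O) f) ?_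
    (InvImage.wf f (WellFounded.prod_lex wellFounded_lt h.wellFounded))
  rintro a b (hab | ⟨-, hau, hbv⟩)
  · have hiff : t a v ↔ t b v :=
      ⟨t.trans' (t.symm' (h.adj hab).2), t.trans' (h.adj hab).2⟩
    exact Prod.lex_def.2 (.inr ⟨propext hiff, hab⟩)
  · have hav : ¬ t a v := fun hav => huv (t.trans' (t.symm' hau) hav)
    exact Prod.lex_def.2 (.inl ⟨fun hav' => absurd hav' hav, fun hle => hav (hle hbv)⟩)

lemma isAcyclicOrientation_glue (h : IsAcyclicOrientation (blockGraph G t) O) (huv : ¬ t u v) :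
    IsAcyclicOrientation (blockGraph G (mergeBlocks t u v)) (glue G t u v O) where
  adj_iff a b := by
    have hadj := h.adj_iff a b
    have hsymm := G.adj_comm a b
    rw [blockGraph_adj] at hadj ⊢
    rw [mergeBlocks_apply]
    unfold glue
    tauto
  wellFounded := wellFounded_glue h huv

lemma sources_glue (hadj : G.Adj u v) (hR : IsTransversal t (insert v R)) (hv : v ∉ R)
    (hO : sources O = insert v R) : sources (glue G t u v O) = R := by
  ext x
  constructor
  · intro hx
    have hxO : x ∈ insert v R := hO ▸ fun y hyx => hx y (.inl hyx)
    rcases hxO with rfl | hxR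
    · exact absurd (.inr ⟨hadj, t.refl' u, t.refl' x⟩) (hx u)
    · exact hxR
  · rintro hx y (hyx | ⟨-, -, hxv⟩)
    · have hxO : x ∈ sources O := hO ▸ Set.mem_insert_of_mem v hx
      exact hxO y hyx
    · exact hv (hR.eq_of_rel (.inr hx) (.inl rfl) hxv ▸ hx)

lemma glue_mem_acyclicOrientations (hadj : G.Adj u v) (hu : u ∈ R) (huv : ¬ t u v)
    (hR : IsTransversal (mergeBlocks t u v) R)
    (hO : O ∈ acyclicOrientations (blockGraph G t) (insert v R)) :
    glue G t u v O ∈ acyclicOrientations (blockGraph G (mergeBlocks t u v)) R :=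
  ⟨isAcyclicOrientation_glue hO.1 huv,
    sources_glue hadj (hR.insert_of_mergeBlocks hu huv)
      (hR.notMem_of_rel hu hadj.ne mergeBlocks_rel) hO.2⟩

lemma reflTransGen_glue_iff (h : IsAcyclicOrientation (blockGraph G t) O)
    (hR : IsTransversal t (sources O)) (hv : v ∈ sources O) {x : α} :
    ReflTransGen (glue G t u v O) v x ↔ t x v := by
  constructor
  · intro hx
    induction hx with
    | refl => exact t.refl' v
    | tail _ hbc ih =>
      rcases hbc with hbc | ⟨-, -, hcv⟩
      · exact t.trans' (t.symm' (h.adj hbc).2) ih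
      · exact hcv
  · intro hxv
    obtain ⟨r, hr, hrx⟩ := h.exists_mem_sources_reflTransGen x
    obtain rfl : r = v := hR.eq_of_rel hr hv (t.trans' (h.rel_of_reflTransGen hrx) hxv)
    exact ReflTransGen.mono (fun _ _ => .inl) _ _ hrx

lemma splitBlocks_glue (h : IsAcyclicOrientation (blockGraph G t) O) (huv : ¬ t u v)
    (hR : IsTransversal t (sources O)) (hv : v ∈ sources O) :
    splitBlocks (mergeBlocks t u v) (glue G t u v O) v = t := by
  have hsymm := @t.symm'
  have htrans := @t.trans'
  ext x y
  rw [splitBlocks_apply, reflTransGen_glue_iff h hR hv, reflTransGen_glue_iff h hR hv,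
    mergeBlocks_apply]
  grind

lemma blockArcs_glue (h : IsAcyclicOrientation (blockGraph G t) O) (huv : ¬ t u v) :
    blockArcs (glue G t u v O) t = O := by
  have hsymm := @t.symm'
  have htrans := @t.trans'
  ext a b
  have hrel : O a b → t a b := fun hab => (h.adj hab).2
  simp only [glue, blockArcs]
  grind

end Glue

end MergeSplit

section MobiusFunction

variable {G : SimpleGraph V}

instance : OrderBot (ConnPartition G) where
  bot := ⟨⊥, forall_classes_connected_iff.2 bot_le⟩
  bot_le t := show ⊥ ≤ t.1 from bot_le

/-- Merging the blocks of two adjacent vertices `u` and `v`, as a closure operator on connected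
partitions; the closed partitions are those with `u` and `v` in the same block. -/
def mergeClosure {u v : V} (hadj : G.Adj u v) : ClosureOperator (ConnPartition G) :=
  .ofPred
    (fun t => ⟨mergeBlocks t.1 u v, forall_classes_connected_iff.2 <| by
      refine mergeBlocks_le ?_ (SimpleGraph.Adj.reachable ⟨hadj, mergeBlocks_rel⟩)
      exact (forall_classes_connected_iff.1 t.2).trans
        fun _ _ h => h.mono (blockGraph_mono le_mergeBlocks)⟩)
    (fun t => t.1 u v) (fun _ => le_mergeBlocks) (fun _ => mergeBlocks_rel)
    fun _ _ hst huv => mergeBlocks_le hst huv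

lemma mem_filter_mergeClosure_iff {u v : V} (hadj : G.Adj u v) {t π : ConnPartition G}
    (huv : π.1 u v) :
    t ∈ (Ico ⊥ π).filter (fun t => mergeClosure hadj t = π) ↔
      ¬ t.1 u v ∧ mergeBlocks t.1 u v = π.1 := by
  have hclosed : mergeClosure hadj t = t ↔ t.1 u v := (mergeClosure hadj).isClosed_iff.symm
  have heq : mergeBlocks t.1 u v = π.1 ↔ mergeClosure hadj t = π :=
    ⟨fun h => Subtype.ext h, congrArg Subtype.val⟩
  rw [heq, mem_filter, mem_Ico, and_congr_left_iff, ← hclosed]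
  rintro rfl
  rw [and_iff_right bot_le, lt_iff_le_and_ne, and_iff_right ((mergeClosure hadj).le_closure t),
    ne_comm]

lemma exists_splitBlocks_eq {π : ConnPartition G} {R : Set V} {u v : V}
    {O : V → V → Prop} (hR : IsTransversal π.1 R) (hu : u ∈ R) (hadj : G.Adj u v)
    (huv : π.1 u v) (hO : O ∈ acyclicOrientations (blockGraph G π.1) R) :
    ∃ t ∈ (Ico ⊥ π).filter (fun t => mergeClosure hadj t = π), splitBlocks π.1 O v = t.1 ∧
      blockArcs O t.1 ∈ acyclicOrientations (blockGraph G t.1) (insert v R) := by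
  obtain ⟨hO, rfl⟩ := hO
  have hsplit := isAcyclicOrientation_blockArcs hO (splitBlocks_le (v := v) (O := O))
  have hsources := sources_blockArcs_splitBlocks hO v
  have hn := not_splitBlocks_of_mem_sources (s := π.1) hu hadj.ne
  have hmerge := mergeBlocks_splitBlocks hO hu hadj.ne huv
  have hinsert : IsTransversal (splitBlocks π.1 O v) (insert v (sources O)) :=
    IsTransversal.insert_of_mergeBlocks (hmerge.symm ▸ hR) hu hn
  let t : ConnPartition G := ⟨splitBlocks π.1 O v,
    forall_classes_connected_iff.2 (hsplit.le_reachableSetoid (hsources ▸ hinsert))⟩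
  have ht := (mem_filter_mergeClosure_iff (t := t) hadj huv).2 ⟨hn, hmerge⟩
  exact ⟨t, ht, rfl, hsplit, hsources⟩

theorem ncard_acyclicOrientations_eq_sum {π : ConnPartition G} {R : Set V} {u v : V}
    (hR : IsTransversal π.1 R) (hu : u ∈ R) (hadj : G.Adj u v) (huv : π.1 u v) :
    (acyclicOrientations (blockGraph G π.1) R).ncard =
      ∑ t ∈ Ico ⊥ π with mergeClosure hadj t = π,
        (acyclicOrientations (blockGraph G t.1) (insert v R)).ncard := by
  let F := (Ico ⊥ π).filter (fun t => mergeClosure hadj t = π)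
  let A (t : ConnPartition G) := acyclicOrientations (blockGraph G t.1) (insert v R)
  have hF : ∀ t : F, ¬ t.1.1 u v ∧ mergeBlocks t.1.1 u v = π.1 := fun t =>
    (mem_filter_mergeClosure_iff hadj huv).1 t.2
  have hmerged : ∀ t : F, IsTransversal (mergeBlocks t.1.1 u v) R := fun t => (hF t).2 ▸ hR
  have hglue : ∀ p : Σ t : F, A t, glue G p.1.1.1 u v p.2.1 ∈
      acyclicOrientations (blockGraph G π.1) R := fun ⟨t, O, hO⟩ =>
    (hF t).2 ▸ glue_mem_acyclicOrientations hadj hu (hF t).1 (hmerged t) hO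
  have hsplit : ∀ (t : F) (O : A t), splitBlocks π.1 (glue G t.1.1 u v O) v = t.1.1 :=
    fun t ⟨O, hO⟩ => by
      have hRt := (hmerged t).insert_of_mergeBlocks hu (hF t).1
      rw [← (hF t).2]
      exact splitBlocks_glue hO.1 (hF t).1 (hO.2 ▸ hRt) (hO.2 ▸ .inl rfl)
  have hbij : Function.Bijective fun p : Σ t : F, A t =>
      (⟨_, hglue p⟩ : acyclicOrientations (blockGraph G π.1) R) := by
    constructor
    · rintro ⟨t, O, hO⟩ ⟨t', O', hO'⟩ heq
      rw [Subtype.mk.injEq] at heq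
      obtain rfl : t = t' := Subtype.ext <| Subtype.ext <| by
        rw [← hsplit t ⟨O, hO⟩, ← hsplit t' ⟨O', hO'⟩, heq]
      obtain rfl : O = O' := by
        rw [← blockArcs_glue hO.1 (hF t).1, ← blockArcs_glue hO'.1 (hF t).1, heq]
      rfl
    · rintro ⟨O, hO⟩
      obtain ⟨t, ht, htO, hOt⟩ := exists_splitBlocks_eq hR hu hadj huv hO
      have hO' := glue_blockArcs_splitBlocks hO.1 (hO.2.symm ▸ hu) hadj.ne huv
      rw [htO] at hO'
      exact ⟨⟨⟨t, ht⟩, _, hOt⟩, Subtype.ext hO'⟩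
  rw [← Nat.card_coe_set_eq, ← Nat.card_congr (.ofBijective _ hbij), Nat.card_sigma]
  exact sum_coe_sort F fun t => (A t).ncard

theorem mu_bot_eq_ncard_acyclicOrientations (π : ConnPartition G) {R : Set V}
    (hR : IsTransversal π.1 R) :
    IncidenceAlgebra.mu ℤ ⊥ π =
      (-1) ^ (Fintype.card V + R.ncard) * (acyclicOrientations (blockGraph G π.1) R).ncard := by
  induction π using (wellFounded_lt (α := ConnPartition G)).induction generalizing R with
  | _ π ih =>
  by_cases hπ : π = ⊥
  · subst hπ
    obtain rfl : R = Set.univ := isTransversal_bot_iff.1 hR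
    have hbot : acyclicOrientations (blockGraph G ⊥) Set.univ = {⊥} := by
      rw [blockGraph_bot, acyclicOrientations_bot]
    rw [IncidenceAlgebra.mu_self, Set.ncard_univ, Nat.card_eq_fintype_card, ← two_mul, pow_mul]
    simp [show (⊥ : ConnPartition G).1 = ⊥ from rfl, hbot]
  · obtain ⟨u, hu, v, hadj, huv⟩ := exists_adj_of_ne_bot (G := G)
      (fun h => hπ (Subtype.ext h)) (forall_classes_connected_iff.1 π.2) hR
    have hv : v ∉ R := hR.notMem_of_rel hu hadj.ne huv
    have hclosed : ∀ t, mergeClosure hadj t = t ↔ t.1 u v := fun t =>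
      (mergeClosure hadj).isClosed_iff.symm
    have hterm : ∀ t ∈ Ico ⊥ π, mergeClosure hadj t = π → -IncidenceAlgebra.mu ℤ ⊥ t =
        (-1) ^ (Fintype.card V + R.ncard) *
          (acyclicOrientations (blockGraph G t.1) (insert v R)).ncard := by
      intro t ht htπ
      obtain ⟨hn, hmerge⟩ := (mem_filter_mergeClosure_iff hadj huv).1 (mem_filter.2 ⟨ht, htπ⟩)
      rw [ih t (mem_Ico.1 ht).2 (IsTransversal.insert_of_mergeBlocks (hmerge ▸ hR) hu hn),
        Set.ncard_insert_of_notMem hv, ← add_assoc, pow_succ]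
      ring
    rw [mu_eq_neg_sum_closureOperator_fiber (mergeClosure hadj)
        (fun h => hadj.ne ((hclosed ⊥).1 h)) bot_le ((hclosed π).2 huv),
      ncard_acyclicOrientations_eq_sum hR hu hadj huv, Nat.cast_sum, mul_sum, ← sum_neg_distrib]
    exact sum_congr rfl fun t ht => hterm t (mem_filter.1 ht).1 (mem_filter.1 ht).2

-- `mobiusInvariant` is elaborated with the locally finite order structure of the subtype.
lemma mu_congr_instances {P 𝕜 : Type*} [AddCommGroup 𝕜] [One 𝕜] [Preorder P]
    (l₁ l₂ : LocallyFiniteOrder P) (d₁ d₂ : DecidableEq P) (a b : P) :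
    @IncidenceAlgebra.mu 𝕜 P _ _ _ l₁ d₁ a b = @IncidenceAlgebra.mu 𝕜 P _ _ _ l₂ d₂ a b := by
  rw [Subsingleton.elim l₁ l₂, Subsingleton.elim d₁ d₂]

theorem mobiusInvariant_eq_ncard (hG : G.Connected) (q : V) :
    mobiusInvariant G = (acyclicOrientations G {q}).ncard := by
  have hbot : ∀ B ∈ (⊥ : Setoid V).classes, (G.induce B).Connected :=
    forall_classes_connected_iff.2 bot_le
  have htop : ∀ B ∈ (⊤ : Setoid V).classes, (G.induce B).Connected :=
    forall_classes_connected_iff.2 fun x y _ => by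
      rw [blockGraph_top]
      exact hG.preconnected x y
  let zero : ConnPartition G := ⟨⊥, hbot⟩
  let one : ConnPartition G := ⟨⊤, htop⟩
  have hmu : IncidenceAlgebra.mu ℤ zero one =
      (-1) ^ (Fintype.card V + Set.ncard {q}) * (acyclicOrientations G {q}).ncard := by
    rw [show acyclicOrientations G {q} = acyclicOrientations (blockGraph G one.1) {q} by
      rw [blockGraph_top]]
    exact mu_bot_eq_ncard_acyclicOrientations one (isTransversal_top_singleton q)
  calc mobiusInvariant G
      = |IncidenceAlgebra.mu ℤ zero one| := by
        rw [mobiusInvariant, dif_pos ⟨hbot, htop⟩]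
        exact congrArg abs (mu_congr_instances _ _ _ _ _ _)
    _ = (acyclicOrientations G {q}).ncard := by
        rw [hmu, abs_mul, abs_neg_one_pow, one_mul, Nat.abs_cast]

end MobiusFunction

section OrderingOrientation

open Relation

variable {α : Type*} {G : SimpleGraph α} {O O' O'' : α → α → Prop} {k l : α → ℤ} {n : ℕ}

/-- The orientation of `G` in which every edge points to its end with the larger value of `f`. -/
def orientationBy {ι : Type*} [LT ι] (G : SimpleGraph α) (f : α → ι) (a b : α) : Prop :=
  G.Adj a b ∧ f a < f b

lemma isAcyclicOrientation_orientationBy {ι : Type*} [LinearOrder ι] [WellFoundedLT ι] {f : α → ι}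
    (hf : f.Injective) : IsAcyclicOrientation G (orientationBy G f) where
  adj_iff a b := by
    simp only [orientationBy, G.adj_comm b a, ← and_or_left]
    exact ⟨fun h => ⟨h, (hf.ne h.ne).lt_or_gt⟩, And.left⟩
  wellFounded := Subrelation.wf And.right (InvImage.wf f wellFounded_lt)

lemma IsAcyclicOrientation.exists_orientationBy_eq {G : SimpleGraph V} {O : V → V → Prop}
    (h : IsAcyclicOrientation G O) :
    ∃ σ : Fin (Fintype.card V) ≃ V, orientationBy G σ.symm = O := by
  have hwf : IsWellFounded V O := ⟨h.wellFounded⟩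
  let e := (Fintype.equivFin V).symm
  let σ := (Tuple.sort (IsWellFounded.rank O ∘ e)).trans e
  have hσ : Monotone fun i => IsWellFounded.rank O (σ i) :=
    Tuple.monotone_sort (IsWellFounded.rank O ∘ e)
  refine ⟨σ, Eq.symm <| h.eq_of_le (isAcyclicOrientation_orientationBy σ.symm.injective) ?_⟩
  refine fun a b hab => ⟨h.adj hab, hσ.reflect_lt ?_⟩
  simpa only [Equiv.apply_symm_apply] using IsWellFounded.rank_lt_of_rel hab

lemma orientationBy_swap {σ : Fin n ≃ α} {i j : Fin n} (hij : (i : ℕ) + 1 = j)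
    (hadj : ¬ G.Adj (σ i) (σ j)) :
    orientationBy G ((Equiv.swap i j).trans σ).symm = orientationBy G σ.symm := by
  ext a b
  obtain ⟨x, rfl⟩ := σ.surjective a
  obtain ⟨y, rfl⟩ := σ.surjective b
  refine and_congr_right fun hxy => ?_
  have hne : x ≠ y := fun h => hxy.ne (congrArg σ h)
  have hij' : ¬ (x = i ∧ y = j) := fun ⟨hx, hy⟩ => hadj (hx ▸ hy ▸ hxy)
  have hji : ¬ (x = j ∧ y = i) := fun ⟨hx, hy⟩ => hadj (hx ▸ hy ▸ hxy.symm)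
  simp only [Equiv.symm_trans_apply, Equiv.symm_swap, Equiv.symm_apply_apply,
    Equiv.swap_apply_def, Fin.lt_def]
  split_ifs <;> grind

/-- The orientation `O'` of `G` is what becomes of `O` when, on balance, each vertex `v` is turned
`k v` times from a source into a sink. -/
def FlipsBy (G : SimpleGraph α) (k : α → ℤ) (O O' : α → α → Prop) : Prop :=
  ∀ ⦃a b⦄, G.Adj a b → (if O' a b then 1 else 0 : ℤ) = (if O a b then 1 else 0) - k a + k b

namespace FlipsBy

lemma refl (O : α → α → Prop) : FlipsBy G 0 O O := fun a b _ => by simp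

lemma symm (h : FlipsBy G k O O') : FlipsBy G (-k) O' O := fun a b hab => by
  rw [h hab, Pi.neg_apply, Pi.neg_apply]
  ring

lemma trans (h : FlipsBy G k O O') (h' : FlipsBy G l O' O'') : FlipsBy G (k + l) O O'' :=
  fun a b hab => by
    rw [h' hab, h hab, Pi.add_apply, Pi.add_apply]
    ring

lemma abs_sub_le_one (h : FlipsBy G k O O') {a b : α} (hab : G.Adj a b) : |k a - k b| ≤ 1 := by
  have hflip := h hab
  rw [abs_le]
  split_ifs at hflip <;> lia

lemma le_of_reflTransGen (h : FlipsBy G k O O') (hO : IsAcyclicOrientation G O) {a b : α}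
    (hab : ReflTransGen O a b) : k b ≤ k a := by
  induction hab with
  | refl => rfl
  | @tail b c _ hbc ih =>
    have hflip := h (hO.adj hbc)
    rw [if_pos hbc] at hflip
    split_ifs at hflip <;> lia

lemma le_of_mem_acyclicOrientations (h : FlipsBy G k O O') {q : α}
    (hO : O ∈ acyclicOrientations G {q}) (v : α) : k v ≤ k q := by
  obtain ⟨r, hr, hrv⟩ := hO.1.exists_mem_sources_reflTransGen v
  rw [hO.2] at hr
  obtain rfl : r = q := hr
  exact h.le_of_reflTransGen hO.1 hrv

theorem eq_of_mem_acyclicOrientations (h : FlipsBy G k O O') {q : α}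
    (hO : O ∈ acyclicOrientations G {q}) (hO' : O' ∈ acyclicOrientations G {q}) : O = O' := by
  have hk : ∀ v, k v = k q := fun v =>
    (h.le_of_mem_acyclicOrientations hO v).antisymm
      (neg_le_neg_iff.1 (h.symm.le_of_mem_acyclicOrientations hO' v))
  refine hO.1.eq_of_le hO'.1 fun a b hab => ?_
  have hflip := h (hO.1.adj hab)
  rw [if_pos hab, hk a, hk b] at hflip
  by_contra hcon
  rw [if_neg hcon] at hflip
  lia

lemma sub_le_dist (h : FlipsBy G k O O') (hG : G.Connected) (v w : α) : k v - k w ≤ G.dist v w := by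
  obtain ⟨p, hp⟩ := hG.exists_walk_length_eq_dist v w
  rw [← hp]
  clear hp
  induction p with
  | nil => simp
  | cons hadj p ih =>
    have hle := (abs_le.1 (h.abs_sub_le_one hadj)).2
    rw [SimpleGraph.Walk.length_cons]
    push_cast
    linarith

end FlipsBy

lemma coe_finRotate_symm (i : Fin n) :
    ((finRotate n).symm i : ℕ) = if (i : ℕ) = 0 then n - 1 else i - 1 := by
  obtain ⟨j, rfl⟩ := (finRotate n).surjective i
  rw [Equiv.symm_apply_apply]
  cases n with
  | zero => exact j.elim0
  | succ n =>
    rw [coe_finRotate]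
    split_ifs <;> simp_all

lemma flipsBy_finRotate {σ : Fin n ≃ α} {z : Fin n} (hz : (z : ℕ) = 0) :
    FlipsBy G (Pi.single (σ z) 1) (orientationBy G σ.symm)
      (orientationBy G ((finRotate n).trans σ).symm) := by
  intro a b hab
  obtain ⟨x, rfl⟩ := σ.surjective a
  obtain ⟨y, rfl⟩ := σ.surjective b
  have hne : x ≠ y := fun h => hab.ne (congrArg σ h)
  simp only [orientationBy, hab, true_and, Equiv.symm_trans_apply, Equiv.symm_apply_apply,
    Pi.single_apply, σ.injective.eq_iff, Fin.ext_iff, hz, Fin.lt_def, coe_finRotate_symm]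
  grind

end OrderingOrientation

section OrderingClasses

variable {G : SimpleGraph V} {σ τ : Fin (Fintype.card V) ≃ V}

lemma quotMk_swap_trans {i j : Fin (Fintype.card V)} (hij : (i : ℕ) + 1 = j)
    (hadj : ¬ G.Adj (σ i) (σ j)) :
    Quot.mk (orderingStep G) ((Equiv.swap i j).trans σ) = Quot.mk _ σ := by
  obtain ⟨j, hj⟩ := j
  obtain rfl : (i : ℕ) + 1 = j := hij
  exact (Quot.sound (.inl ⟨i, _, hadj, rfl⟩)).symm

lemma exists_flipsBy_of_quotMk_eq (h : Quot.mk (orderingStep G) σ = Quot.mk _ τ) :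
    ∃ k, FlipsBy G k (orientationBy G σ.symm) (orientationBy G τ.symm) := by
  have hgen := Quot.eqvGen_exact h
  clear h
  induction hgen with
  | rel σ τ hstep =>
    rcases hstep with ⟨j, hj, hadj, rfl⟩ | rfl
    · rw [orientationBy_swap rfl hadj]
      exact ⟨0, .refl _⟩
    · rcases isEmpty_or_nonempty V with hV | hV
      · exact ⟨0, fun a => hV.elim a⟩
      · exact ⟨_, flipsBy_finRotate (z := ⟨0, Fintype.card_pos⟩) rfl⟩
  | refl σ => exact ⟨0, .refl _⟩
  | symm σ τ _ ih =>
    obtain ⟨k, hk⟩ := ih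
    exact ⟨-k, hk.symm⟩
  | trans σ τ ρ _ _ ih ih' =>
    obtain ⟨k, hk⟩ := ih
    obtain ⟨l, hl⟩ := ih'
    exact ⟨k + l, hk.trans hl⟩

lemma exists_descent_of_ne_one {n : ℕ} {g : Equiv.Perm (Fin n)} (hg : g ≠ 1) :
    ∃ i j : Fin n, (i : ℕ) + 1 = j ∧ g j < g i := by
  by_contra! hcon
  cases n with
  | zero => exact hg (Subsingleton.elim _ _)
  | succ n =>
    have hmono : StrictMono g := (Fin.monotone_iff_le_succ.2 fun i =>
      hcon i.castSucc i.succ rfl).strictMono_of_injective g.injective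
    have hid : hmono.orderIsoOfSurjective g g.surjective = .refl _ := Subsingleton.elim _ _
    exact hg (Equiv.ext fun i => congrArg (fun f : Fin (n + 1) ≃o Fin (n + 1) => f i) hid)

theorem quotMk_eq_of_orientationBy_eq
    (h : orientationBy G σ.symm = orientationBy G τ.symm) :
    Quot.mk (orderingStep G) σ = Quot.mk _ τ := by
  induction σ using (InvImage.wf (fun σ : Fin (Fintype.card V) ≃ V => toLex (τ.symm ∘ σ))
    wellFounded_lt).induction with
  | _ σ ih =>
  by_cases hστ : σ.trans τ.symm = 1
  · refine congrArg _ (Equiv.ext fun i => ?_)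
    simpa [Equiv.symm_apply_eq] using Equiv.congr_fun hστ i
  · obtain ⟨i, j, hij, hlt⟩ := exists_descent_of_ne_one hστ
    have hij' : i < j := Fin.lt_def.2 (by lia)
    have hadj : ¬ G.Adj (σ i) (σ j) := fun hadj => by
      have hσ : orientationBy G σ.symm (σ i) (σ j) :=
        ⟨hadj, by simpa only [Equiv.symm_apply_apply] using hij'⟩
      exact lt_asymm hlt (h ▸ hσ).2
    rw [← quotMk_swap_trans hij hadj]
    exact ih _ (Pi.lex_desc hij'.le hlt) ((orientationBy_swap hij hadj).trans h)

lemma exists_quotMk_eq_flipsBy_single {v : V} (hv : v ∈ sources (orientationBy G σ.symm)) :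
    ∃ τ, Quot.mk (orderingStep G) σ = Quot.mk _ τ ∧
      FlipsBy G (Pi.single v 1) (orientationBy G σ.symm) (orientationBy G τ.symm) := by
  obtain ⟨z, rfl⟩ := σ.surjective v
  induction hp : (z : ℕ) generalizing σ z with
  | zero => exact ⟨_, Quot.sound (.inr rfl), flipsBy_finRotate hp⟩
  | succ p ih =>
    let i : Fin (Fintype.card V) := ⟨p, by lia⟩
    have hadj : ¬ G.Adj (σ i) (σ z) := fun hadj =>
      hv (σ i) ⟨hadj, by simp [i, Fin.lt_def, hp]⟩
    have hswap := orientationBy_swap (i := i) hp.symm hadj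
    have hi : (Equiv.swap i z).trans σ i = σ z := congrArg σ (Equiv.swap_apply_left i z)
    obtain ⟨τ, hστ, hflip⟩ := ih (σ := (Equiv.swap i z).trans σ) i (by rwa [hi, hswap]) rfl
    rw [hi, hswap] at hflip
    exact ⟨τ, (quotMk_swap_trans hp.symm hadj).symm.trans hστ, hflip⟩

theorem exists_quotMk_eq_mem_acyclicOrientations (hG : G.Connected) (q : V)
    (σ : Fin (Fintype.card V) ≃ V) : ∃ τ, Quot.mk (orderingStep G) σ = Quot.mk _ τ ∧
      orientationBy G τ.symm ∈ acyclicOrientations G {q} := by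
  obtain ⟨_, ⟨τ, k, hστ, hk, hq, rfl⟩, hmax⟩ := Int.exists_greatest_of_bdd
    (P := fun z => ∃ τ k, Quot.mk (orderingStep G) σ = Quot.mk _ τ ∧
      FlipsBy G k (orientationBy G σ.symm) (orientationBy G τ.symm) ∧ k q = 0 ∧ ∑ v, k v = z)
    ⟨∑ v, (G.dist v q : ℤ), by
      rintro _ ⟨τ, k, -, hk, hq, rfl⟩
      exact sum_le_sum fun v _ => by simpa [hq] using hk.sub_le_dist hG v q⟩
    ⟨0, σ, 0, rfl, .refl _, rfl, by simp⟩
  have hacyc := isAcyclicOrientation_orientationBy (G := G) τ.symm.injective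
  have heq : ∀ x ∈ sources (orientationBy G τ.symm), x = q := by
    intro x hx
    by_contra hxq
    obtain ⟨ρ, hτρ, hflip⟩ := exists_quotMk_eq_flipsBy_single hx
    have hle := hmax _ ⟨ρ, k + Pi.single x 1, hστ.trans hτρ, hk.trans hflip,
      by simp [hq, Ne.symm hxq], rfl⟩
    simp [sum_add_distrib] at hle
  obtain ⟨r, hr, -⟩ := hacyc.exists_mem_sources_reflTransGen q
  exact ⟨τ, hστ, hacyc, Set.eq_singleton_iff_unique_mem.2 ⟨heq r hr ▸ hr, heq⟩⟩

theorem card_quot_orderingStep (hG : G.Connected) (q : V) :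
    Nat.card (Quot (orderingStep G)) = (acyclicOrientations G {q}).ncard := by
  choose σ hσ using fun O : acyclicOrientations G {q} => O.2.1.exists_orientationBy_eq
  have hbij : Function.Bijective fun O => Quot.mk (orderingStep G) (σ O) := by
    constructor
    · intro O O' h
      obtain ⟨k, hk⟩ := exists_flipsBy_of_quotMk_eq h
      rw [hσ, hσ] at hk
      exact Subtype.ext (hk.eq_of_mem_acyclicOrientations O.2 O'.2)
    · rintro ⟨τ⟩
      obtain ⟨ρ, hτρ, hρ⟩ := exists_quotMk_eq_mem_acyclicOrientations hG q τ
      exact ⟨⟨_, hρ⟩, (quotMk_eq_of_orientationBy_eq (hσ _)).trans hτρ.symm⟩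
  rw [← Nat.card_coe_set_eq, Nat.card_congr (.ofBijective _ hbij)]

end OrderingClasses

/-- for a finite connected simple graph `G` on `d` vertices, the Möbius invariant
`μ(G)` equals the number of equivalence classes of linear orderings of the vertices under the
equivalence relation generated by commuting consecutive non-adjacent vertices and by cyclic
shifts. -/
theorem mobiusInvariant_eq_card_ordering_classes (G : SimpleGraph V) (hG : G.Connected) :
    mobiusInvariant G = (Nat.card (Quot (orderingStep G)) : ℤ) := by
  obtain ⟨q⟩ := hG.nonempty
  rw [mobiusInvariant_eq_ncard hG q, card_quot_orderingStep hG q]
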